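/- arXiv:1206.0411 — 2 statements merged into one kernel-verified Lean document; each statement's English description precedes it below -/
import Mathlib

section
/- The set O has cardinality q^3 + 1 and is invariant under the right action of Ree(q) on P^6(F_q); Ree(q) acts faithfully and doubly transitively on O; the stabilizer in Ree(q) of P∞ is U(q)H(q) = {u·h : u ∈ U(q), h ∈ H(q)}, the stabilizer of P0 is the conjugate (U(q)H(q))^Υ, and the stabilizer of the ordered pair (P∞, P0) is H(q). -/
open Matrix

set_option linter.unusedSectionVars false

noncomputable section

namespace ReePaper

variable {F : Type*} [Field F] [Fintype F]

/-- The matrix `α(x)`. -/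
def amat (t : ℕ) (x : F) : Matrix (Fin 7) (Fin 7) F :=
  !![1, x^t, 0, 0, -x^(3*t+1), -x^(3*t+2), x^(4*t+2);
     0, 1, x, x^(t+1), -x^(2*t+1), 0, -x^(3*t+2);
     0, 0, 1, x^t, -x^(2*t), 0, x^(3*t+1);
     0, 0, 0, 1, x^t, 0, 0;
     0, 0, 0, 0, 1, -x, x^(t+1);
     0, 0, 0, 0, 0, 1, -x^t;
     0, 0, 0, 0, 0, 0, 1]

/-- The matrix `β(x)`. -/
def bmat (t : ℕ) (x : F) : Matrix (Fin 7) (Fin 7) F :=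
  !![1, 0, -x^t, 0, -x, 0, -x^(t+1);
     0, 1, 0, x^t, 0, -x^(2*t), 0;
     0, 0, 1, 0, 0, 0, x;
     0, 0, 0, 1, 0, x^t, 0;
     0, 0, 0, 0, 1, 0, x^t;
     0, 0, 0, 0, 0, 1, 0;
     0, 0, 0, 0, 0, 0, 1]

/-- The matrix `γ(x)`. -/
def cmat (t : ℕ) (x : F) : Matrix (Fin 7) (Fin 7) F :=
  !![1, 0, 0, -x^t, 0, -x, -x^(2*t);
     0, 1, 0, 0, -x^t, 0, x;
     0, 0, 1, 0, 0, x^t, 0;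
     0, 0, 0, 1, 0, 0, -x^t;
     0, 0, 0, 0, 1, 0, 0;
     0, 0, 0, 0, 0, 1, 0;
     0, 0, 0, 0, 0, 0, 1]

/-- The diagonal matrix `h(λ)`. -/
def hmat (t : ℕ) (l : Fˣ) : Matrix (Fin 7) (Fin 7) F :=
  Matrix.diagonal ![((l ^ (t : ℤ) : Fˣ) : F), ((l ^ (1 - (t : ℤ)) : Fˣ) : F),
    ((l ^ (2 * (t : ℤ) - 1) : Fˣ) : F), 1, ((l ^ (1 - 2 * (t : ℤ)) : Fˣ) : F),
    ((l ^ ((t : ℤ) - 1) : Fˣ) : F), ((l ^ (-(t : ℤ)) : Fˣ) : F)]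

/-- The matrix `Υ`, the antidiagonal matrix with all entries `-1`. -/
def ups : Matrix (Fin 7) (Fin 7) F :=
  !![0, 0, 0, 0, 0, 0, -1;
     0, 0, 0, 0, 0, -1, 0;
     0, 0, 0, 0, -1, 0, 0;
     0, 0, 0, -1, 0, 0, 0;
     0, 0, -1, 0, 0, 0, 0;
     0, -1, 0, 0, 0, 0, 0;
     -1, 0, 0, 0, 0, 0, 0]

/-- `S(a, b, c) = α(a) β(b) γ(c)`. -/
def Smat (t : ℕ) (a b c : F) : Matrix (Fin 7) (Fin 7) F :=
  amat t a * bmat t b * cmat t c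

/-- The Ree group `Ree(q) = ⟨α(x), β(x), γ(x), h(λ), Υ⟩ ≤ GL(7, q)`. -/
def ReeGroup (t : ℕ) : Subgroup (GL (Fin 7) F) :=
  Subgroup.closure {g : GL (Fin 7) F |
    (∃ x : F, (g : Matrix (Fin 7) (Fin 7) F) = amat t x) ∨
    (∃ x : F, (g : Matrix (Fin 7) (Fin 7) F) = bmat t x) ∨
    (∃ x : F, (g : Matrix (Fin 7) (Fin 7) F) = cmat t x) ∨
    (∃ l : Fˣ, (g : Matrix (Fin 7) (Fin 7) F) = hmat t l) ∨
    (g : Matrix (Fin 7) (Fin 7) F) = ups}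

/-- The subgroup `U(q) = ⟨α(x), β(x), γ(x)⟩`. -/
def Usub (t : ℕ) : Subgroup (GL (Fin 7) F) :=
  Subgroup.closure {g : GL (Fin 7) F |
    (∃ x : F, (g : Matrix (Fin 7) (Fin 7) F) = amat t x) ∨
    (∃ x : F, (g : Matrix (Fin 7) (Fin 7) F) = bmat t x) ∨
    (∃ x : F, (g : Matrix (Fin 7) (Fin 7) F) = cmat t x)}

/-- The subgroup `H(q) = {h(λ) : λ ∈ F_q^×}`. -/
def Hsub (t : ℕ) : Subgroup (GL (Fin 7) F) :=
  Subgroup.closure {g : GL (Fin 7) F |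
    ∃ l : Fˣ, (g : Matrix (Fin 7) (Fin 7) F) = hmat t l}

/-- The right action of an element of `GL(7, F)` on the projective space `P^6(F)`
of the row vector space `F^7`. -/
def ptAct (g : GL (Fin 7) F) (P : Projectivization F (Fin 7 → F)) :
    Projectivization F (Fin 7 → F) :=
  Projectivization.map (Matrix.vecMulLinear (g : Matrix (Fin 7) (Fin 7) F))
    (by
      intro u v huv
      simp only [Matrix.vecMulLinear_apply] at huv
      have h2 : u ᵥ* ((g : Matrix (Fin 7) (Fin 7) F) * ((g⁻¹ : GL (Fin 7) F) : Matrix (Fin 7) (Fin 7) F))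
          = v ᵥ* ((g : Matrix (Fin 7) (Fin 7) F) * ((g⁻¹ : GL (Fin 7) F) : Matrix (Fin 7) (Fin 7) F)) := by
        rw [← Matrix.vecMul_vecMul, ← Matrix.vecMul_vecMul, huv]
      rwa [g.mul_inv, Matrix.vecMul_one, Matrix.vecMul_one] at h2) P

/-- The point `P∞ = (0 : 0 : 0 : 0 : 0 : 0 : 1)`. -/
def Pinf : Projectivization F (Fin 7 → F) :=
  Projectivization.mk F ![0, 0, 0, 0, 0, 0, 1]
    (by
      intro h
      have h1 : (1 : F) = 0 := by
        have := congrFun h 6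
        rwa [show (![0, 0, 0, 0, 0, 0, 1] : Fin 7 → F) 6 = 1 from rfl] at this
      exact one_ne_zero h1)

/-- The point `P0 = (1 : 0 : 0 : 0 : 0 : 0 : 0)`. -/
def Pzero : Projectivization F (Fin 7 → F) :=
  Projectivization.mk F ![1, 0, 0, 0, 0, 0, 0]
    (by intro h; have := congrFun h 0; simp at this)

/-- The representative vector of the point of `O` with parameters `a, b, c`. -/
def oVec (t : ℕ) (a b c : F) : Fin 7 → F :=
  ![1, a^t, -b^t, (a*b)^t - c^t, -b - a^(3*t+1) - (a*c)^t,
    -c - (b*c)^t - a^(3*t+2) - a^t * b^(2*t),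
    a^t * c - b^(t+1) + a^(4*t+2) - c^(2*t) - a^(3*t+1) * b^t - (a*b*c)^t]

lemma oVec_ne_zero (t : ℕ) (a b c : F) : oVec t a b c ≠ 0 := by
  intro h
  have h1 : (1 : F) = 0 := by
    have := congrFun h 0
    rwa [show oVec t a b c 0 = 1 from rfl] at this
  exact one_ne_zero h1

/-- The set `O ⊆ P^6(F_q)` on which `Ree(q)` acts doubly transitively. -/
def Oset (t : ℕ) : Set (Projectivization F (Fin 7 → F)) :=
  {Pinf} ∪ {P | ∃ a b c : F, P = Projectivization.mk F (oVec t a b c) (oVec_ne_zero t a b c)}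

end ReePaper

open ReePaper

namespace ReePaper

/-- The invariant alternating product. -/
def cr {F : Type*} [Field F] (x y : Fin 7 → F) : Fin 7 → F :=
  ![-(x 0 * y 3 - x 3 * y 0) + (x 1 * y 2 - x 2 * y 1),
    (x 1 * y 3 - x 3 * y 1) + (x 0 * y 4 - x 4 * y 0),
    (x 2 * y 3 - x 3 * y 2) - (x 0 * y 5 - x 5 * y 0),
    -(x 0 * y 6 - x 6 * y 0) + (x 1 * y 5 - x 5 * y 1) + (x 2 * y 4 - x 4 * y 2),
    (x 3 * y 4 - x 4 * y 3) - (x 1 * y 6 - x 6 * y 1),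
    (x 3 * y 5 - x 5 * y 3) + (x 2 * y 6 - x 6 * y 2),
    -(x 3 * y 6 - x 6 * y 3) + (x 4 * y 5 - x 5 * y 4)]

/-- The twisted line coordinates. -/
def pq {F : Type*} [Field F] (x y : Fin 7 → F) : Fin 7 → F :=
  ![x 0 * y 1 - x 1 * y 0,
    x 0 * y 2 - x 2 * y 0,
    -(x 1 * y 4 - x 4 * y 1),
    (x 0 * y 6 - x 6 * y 0) + (x 1 * y 5 - x 5 * y 1),
    -(x 2 * y 5 - x 5 * y 2),
    x 4 * y 6 - x 6 * y 4,
    x 5 * y 6 - x 6 * y 5]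

/-- Absolute vectors. -/
def IsAbs {F : Type*} [Field F] (φ : F →+* F) (v : Fin 7 → F) : Prop :=
  ∃ y : Fin 7 → F, (∀ i, cr v y i = 0) ∧ ∀ i, pq v y i = φ (v i)

lemma forall_fin7 {p : Fin 7 → Prop} :
    (∀ i, p i) ↔ p 0 ∧ p 1 ∧ p 2 ∧ p 3 ∧ p 4 ∧ p 5 ∧ p 6 := by
  constructor
  · intro h
    exact ⟨h 0, h 1, h 2, h 3, h 4, h 5, h 6⟩
  · rintro ⟨h0, h1, h2, h3, h4, h5, h6⟩ i
    fin_cases i <;> assumption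

lemma vec7_0 {F : Type*} (a b c d e f g : F) : (![a, b, c, d, e, f, g] : Fin 7 → F) 0 = a := rfl
lemma vec7_1 {F : Type*} (a b c d e f g : F) : (![a, b, c, d, e, f, g] : Fin 7 → F) 1 = b := rfl
lemma vec7_2 {F : Type*} (a b c d e f g : F) : (![a, b, c, d, e, f, g] : Fin 7 → F) 2 = c := rfl
lemma vec7_3 {F : Type*} (a b c d e f g : F) : (![a, b, c, d, e, f, g] : Fin 7 → F) 3 = d := rfl
lemma vec7_4 {F : Type*} (a b c d e f g : F) : (![a, b, c, d, e, f, g] : Fin 7 → F) 4 = e := rfl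
lemma vec7_5 {F : Type*} (a b c d e f g : F) : (![a, b, c, d, e, f, g] : Fin 7 → F) 5 = f := rfl
lemma vec7_6 {F : Type*} (a b c d e f g : F) : (![a, b, c, d, e, f, g] : Fin 7 → F) 6 = g := rfl

/-- The polynomial form of `oVec`, with `A = a^t` and so on. -/
def oV {F : Type*} [Field F] (a b c A B C : F) : Fin 7 → F :=
  ![1, A, -B, A * B - C, -b - A ^ 3 * a - A * C, -c - B * C - A ^ 3 * a ^ 2 - A * B ^ 2,
    A * c - B * b + A ^ 4 * a ^ 2 - C ^ 2 - A ^ 3 * a * B - A * B * C]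

lemma oVec_eq {F : Type*} [Field F] (t : ℕ) (a b c : F) :
    oVec t a b c = oV a b c (a ^ t) (b ^ t) (c ^ t) := by
  simp only [oVec, oV, mul_pow, pow_add, pow_mul', pow_one]


variable {F : Type*} [Field F] (θ φ : F →+* F)

lemma isAbs_oV (h3 : (3 : F) = 0) (hφ : ∀ x, φ x = θ x ^ 3) (hφθ : ∀ x, φ (θ x) = x)
    (a b c : F) : IsAbs φ (oV a b c (θ a) (θ b) (θ c)) := by
  refine ⟨![0, 1, a, θ a * a + θ b, (θ a * θ b - θ c) - θ a * (θ a * a + θ b),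
    -θ b * (θ a * a + θ b) - (θ a * θ b - θ c) * a,
    θ a * (-θ b * (θ a * a + θ b) - (θ a * θ b - θ c) * a)
    - (-c - θ b * θ c - θ a ^ 3 * a ^ 2 - θ a * θ b ^ 2)
    + (-θ b) * ((θ a * θ b - θ c) - θ a * (θ a * a + θ b))
    - (-b - θ a ^ 3 * a - θ a * θ c) * a], ?_, ?_⟩
  all_goals
    rw [forall_fin7]
    simp only [cr, pq, oV, vec7_0, vec7_1, vec7_2, vec7_3, vec7_4, vec7_5, vec7_6]
    try simp only [map_add, map_sub, map_mul, map_neg, map_one, map_pow, hφθ]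
    try simp only [hφ]
    clear hφ hφθ
    generalize θ a = A
    generalize θ b = B
    generalize θ c = C
    refine ⟨?_, ?_, ?_, ?_, ?_, ?_, ?_⟩
  all_goals
    first
    | ring1
    | grind

/-- `Υ` preserves absolute vectors. -/
lemma isAbs_ups (v : Fin 7 → F) (h : IsAbs φ v) :
    IsAbs φ ![-v 6, -v 5, -v 4, -v 3, -v 2, -v 1, -v 0] := by
  obtain ⟨y, h1, h2⟩ := h
  refine ⟨![-y 6, -y 5, -y 4, -y 3, -y 2, -y 1, -y 0], ?_, ?_⟩
  all_goals
    rw [forall_fin7] at h1 h2 ⊢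
    simp only [cr, pq, vec7_0, vec7_1, vec7_2, vec7_3, vec7_4, vec7_5, vec7_6, map_neg] at h1 h2 ⊢
    obtain ⟨e0, e1, e2, e3, e4, e5, e6⟩ := h1
    obtain ⟨f0, f1, f2, f3, f4, f5, f6⟩ := h2
  · exact ⟨by linear_combination -e6, by linear_combination -e5, by linear_combination -e4,
      by linear_combination -e3, by linear_combination -e2, by linear_combination -e1,
      by linear_combination -e0⟩
  · exact ⟨by linear_combination -f6, by linear_combination -f5, by linear_combination -f4,
      by linear_combination -f3, by linear_combination -f2, by linear_combination -f1,
      by linear_combination -f0⟩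

lemma isAbs_smul (v : Fin 7 → F) (k : F) (hk : k ≠ 0) (h : IsAbs φ v) :
    IsAbs φ (k • v) := by
  obtain ⟨y, h1, h2⟩ := h
  refine ⟨(φ k * k⁻¹) • y, ?_, ?_⟩
  · rw [forall_fin7] at h1 ⊢
    simp only [cr, vec7_0, vec7_1, vec7_2, vec7_3, vec7_4, vec7_5, vec7_6, Pi.smul_apply,
      smul_eq_mul] at h1 ⊢
    obtain ⟨e0, e1, e2, e3, e4, e5, e6⟩ := h1
    refine ⟨?_, ?_, ?_, ?_, ?_, ?_, ?_⟩
    · linear_combination (k * (φ k * k⁻¹)) * e0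
    · linear_combination (k * (φ k * k⁻¹)) * e1
    · linear_combination (k * (φ k * k⁻¹)) * e2
    · linear_combination (k * (φ k * k⁻¹)) * e3
    · linear_combination (k * (φ k * k⁻¹)) * e4
    · linear_combination (k * (φ k * k⁻¹)) * e5
    · linear_combination (k * (φ k * k⁻¹)) * e6
  · rw [forall_fin7] at h2 ⊢
    have hkk : k * (φ k * k⁻¹) = φ k := by field_simp
    simp only [pq, vec7_0, vec7_1, vec7_2, vec7_3, vec7_4, vec7_5, vec7_6, Pi.smul_apply,
      smul_eq_mul, map_mul, ← h2] at h2 ⊢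
    generalize φ k * k⁻¹ = s at *
    rw [← hkk]
    refine ⟨?_, ?_, ?_, ?_, ?_, ?_, ?_⟩ <;> ring

/-- An absolute vector with first coordinate `1` is some `oV a b c`. -/
lemma isAbs_one (h3 : (3 : F) = 0) (hφ : ∀ x, φ x = θ x ^ 3) (hφθ : ∀ x, φ (θ x) = x)
    (hθφ : ∀ x, θ (φ x) = x) (w : Fin 7 → F) (hw : w 0 = 1) (h : IsAbs φ w) :
    ∃ a b c, w = oV a b c (θ a) (θ b) (θ c) := by
  obtain ⟨y, h1, h2⟩ := h
  refine ⟨φ (w 1), -φ (w 2), φ (w 1 * (-w 2) - w 3), ?_⟩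
  rw [funext_iff]
  rw [forall_fin7] at h1 h2 ⊢
  simp only [cr, pq, oV, vec7_0, vec7_1, vec7_2, vec7_3, vec7_4, vec7_5, vec7_6] at h1 h2 ⊢
  simp only [map_sub, map_mul, map_neg, hθφ]
  generalize w 1 = w1 at *
  generalize w 2 = w2 at *
  generalize w 3 = w3 at *
  generalize w 4 = w4 at *
  generalize w 5 = w5 at *
  generalize w 6 = w6 at *
  rw [hw] at h1 h2 ⊢
  rw [map_one] at h2
  obtain ⟨e0, e1, e2, e3, e4, e5, e6⟩ := h1
  obtain ⟨f0, f1, f2, f3, f4, f5, f6⟩ := h2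
  generalize y 0 = y0 at *
  obtain ⟨z1, hz1⟩ : ∃ z, z = y 1 - w1 * y0 := ⟨_, rfl⟩
  obtain ⟨z2, hz2⟩ : ∃ z, z = y 2 - w2 * y0 := ⟨_, rfl⟩
  obtain ⟨z3, hz3⟩ : ∃ z, z = y 3 - w3 * y0 := ⟨_, rfl⟩
  obtain ⟨z4, hz4⟩ : ∃ z, z = y 4 - w4 * y0 := ⟨_, rfl⟩
  obtain ⟨z5, hz5⟩ : ∃ z, z = y 5 - w5 * y0 := ⟨_, rfl⟩
  obtain ⟨z6, hz6⟩ : ∃ z, z = y 6 - w6 * y0 := ⟨_, rfl⟩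
  have k1 : y 1 = z1 + w1 * y0 := by rw [hz1]; ring
  have k2 : y 2 = z2 + w2 * y0 := by rw [hz2]; ring
  have k3 : y 3 = z3 + w3 * y0 := by rw [hz3]; ring
  have k4 : y 4 = z4 + w4 * y0 := by rw [hz4]; ring
  have k5 : y 5 = z5 + w5 * y0 := by rw [hz5]; ring
  have k6 : y 6 = z6 + w6 * y0 := by rw [hz6]; ring
  simp only [k1, k2, k3, k4, k5, k6] at e0 e1 e2 e3 e4 e5 e6 f0 f1 f2 f3 f4 f5 f6
  clear hz1 hz2 hz3 hz4 hz5 hz6 k1 k2 k3 k4 k5 k6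
  have g1 : z1 = 1 := by linear_combination f0
  subst g1
  have g2 : z2 = φ w1 := by linear_combination f1
  subst g2
  have g3 : z3 = w1 * φ w1 - w2 := by linear_combination -e0
  subst g3
  have g4 : z4 = w3 - w1 * (w1 * φ w1 - w2) := by linear_combination e1
  subst g4
  have g5 : z5 = w2 * (w1 * φ w1 - w2) - w3 * φ w1 := by linear_combination -e2
  subst g5
  have q4 : w4 = φ w2 + w1 * (w3 - w1 * (w1 * φ w1 - w2)) := by linear_combination f2
  subst q4
  have g6 : z6 = w1 * (w2 * (w1 * φ w1 - w2) - w3 * φ w1) - w5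
    + w2 * (w3 - w1 * (w1 * φ w1 - w2))
    - (φ w2 + w1 * (w3 - w1 * (w1 * φ w1 - w2))) * φ w1 := by linear_combination -e3
  subst g6
  clear e0 e1 e2 e3 f0 f1 f2
  have q5 : w5 = φ w3 + w1 * (w2 * (w1 * φ w1 - w2) - w3 * φ w1)
    - w2 * (w3 - w1 * (w1 * φ w1 - w2))
    + (φ w2 + w1 * (w3 - w1 * (w1 * φ w1 - w2))) * φ w1 := by
    linear_combination f3 - (w1 * (w2 * (w1 * φ w1 - w2) - w3 * φ w1) - w5) * h3
  subst q5
  generalize φ w1 = u1 at *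
  generalize φ w2 = u2 at *
  generalize φ w3 = u3 at *
  clear f3 f4 f5 f6 e5 e6 hφ hφθ hθφ
  refine ⟨rfl, trivial, ?_, ?_, ?_, ?_, ?_⟩
  all_goals
    first
    | ring1
    | grind

/-- An absolute vector with first coordinate `0` is a multiple of the last basis vector. -/
lemma isAbs_zero (w : Fin 7 → F) (hw : w 0 = 0) (h : IsAbs φ w) :
    w 1 = 0 ∧ w 2 = 0 ∧ w 3 = 0 ∧ w 4 = 0 ∧ w 5 = 0 := by
  obtain ⟨y, h1, h2⟩ := h
  rw [forall_fin7] at h1 h2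
  simp only [cr, pq, vec7_0, vec7_1, vec7_2, vec7_3, vec7_4, vec7_5, vec7_6, hw, map_zero] at h1 h2
  obtain ⟨e0, e1, e2, e3, e4, e5, e6⟩ := h1
  obtain ⟨f0, f1, f2, f3, f4, f5, f6⟩ := h2
  have inj : ∀ x, φ x = 0 → x = 0 := fun x hx => (map_eq_zero φ).1 hx
  have d0 : w 1 = 0 := by
    by_cases hy : y 0 = 0
    · apply inj; rw [← f1, hy]; ring
    · grind
  simp only [d0, map_zero] at *
  have d1 : w 2 = 0 := by
    by_cases hy : y 0 = 0
    · by_cases hy1 : y 1 = 0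
      · apply inj; rw [← f2, hy1]; ring
      · grind
    · grind
  simp only [d1, map_zero] at *
  have d2 : w 4 = 0 := by
    by_cases hy : y 0 = 0
    · by_cases hy1 : y 1 = 0
      · by_cases hy2 : y 2 = 0
        · apply inj; rw [← f4, hy2]; ring
        · grind
      · grind
    · grind
  simp only [d2, map_zero] at *
  have d3 : w 3 = 0 := by
    by_cases hy : y 0 = 0
    · by_cases hy1 : y 1 = 0
      · apply inj; rw [← f3, hy, hy1]; ring
      · grind
    · grind
  simp only [d3, map_zero] at *
  refine ⟨trivial, trivial, trivial, trivial, ?_⟩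
  by_contra hw5
  have : y 4 = 0 := by grind
  apply hw5
  apply inj
  rw [← f5, this]; ring

end ReePaper

namespace ReePaper

variable {F : Type*} [Field F]

lemma vecMul_amat (t : ℕ) (x : F) (v : Fin 7 → F) : v ᵥ* amat t x =
    ![v 0, v 0 * x ^ t + v 1, v 1 * x + v 2, v 1 * (x ^ t * x) + v 2 * x ^ t + v 3,
      -v 0 * ((x ^ t) ^ 3 * x) - v 1 * ((x ^ t) ^ 2 * x) - v 2 * (x ^ t) ^ 2 + v 3 * x ^ t + v 4,
      -v 0 * ((x ^ t) ^ 3 * x ^ 2) - v 4 * x + v 5,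
      v 0 * ((x ^ t) ^ 4 * x ^ 2) - v 1 * ((x ^ t) ^ 3 * x ^ 2) + v 2 * ((x ^ t) ^ 3 * x)
        + v 4 * (x ^ t * x) - v 5 * x ^ t + v 6] := by
  rw [funext_iff, forall_fin7]
  simp only [Matrix.vecMul, dotProduct, Fin.sum_univ_seven, amat, Matrix.of_apply,
    vec7_0, vec7_1, vec7_2, vec7_3, vec7_4, vec7_5, vec7_6, pow_add, pow_mul', pow_one]
  refine ⟨?_, ?_, ?_, ?_, ?_, ?_, ?_⟩ <;> ring

lemma vecMul_bmat (t : ℕ) (x : F) (v : Fin 7 → F) : v ᵥ* bmat t x =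
    ![v 0, v 1, -v 0 * x ^ t + v 2, v 1 * x ^ t + v 3, -v 0 * x + v 4,
      -v 1 * (x ^ t) ^ 2 + v 3 * x ^ t + v 5,
      -v 0 * (x ^ t * x) + v 2 * x + v 4 * x ^ t + v 6] := by
  rw [funext_iff, forall_fin7]
  simp only [Matrix.vecMul, dotProduct, Fin.sum_univ_seven, bmat, Matrix.of_apply,
    vec7_0, vec7_1, vec7_2, vec7_3, vec7_4, vec7_5, vec7_6, pow_add, pow_mul', pow_one]
  refine ⟨?_, ?_, ?_, ?_, ?_, ?_, ?_⟩ <;> ring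

lemma vecMul_cmat (t : ℕ) (x : F) (v : Fin 7 → F) : v ᵥ* cmat t x =
    ![v 0, v 1, v 2, -v 0 * x ^ t + v 3, -v 1 * x ^ t + v 4,
      -v 0 * x + v 2 * x ^ t + v 5,
      -v 0 * (x ^ t) ^ 2 + v 1 * x - v 3 * x ^ t + v 6] := by
  rw [funext_iff, forall_fin7]
  simp only [Matrix.vecMul, dotProduct, Fin.sum_univ_seven, cmat, Matrix.of_apply,
    vec7_0, vec7_1, vec7_2, vec7_3, vec7_4, vec7_5, vec7_6, pow_mul']
  refine ⟨?_, ?_, ?_, ?_, ?_, ?_, ?_⟩ <;> ring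

lemma vecMul_ups (v : Fin 7 → F) : v ᵥ* ups =
    ![-v 6, -v 5, -v 4, -v 3, -v 2, -v 1, -v 0] := by
  rw [funext_iff, forall_fin7]
  simp only [Matrix.vecMul, dotProduct, Fin.sum_univ_seven, ups, Matrix.of_apply,
    vec7_0, vec7_1, vec7_2, vec7_3, vec7_4, vec7_5, vec7_6]
  refine ⟨?_, ?_, ?_, ?_, ?_, ?_, ?_⟩ <;> ring

lemma vecMul_diag (d v : Fin 7 → F) : v ᵥ* Matrix.diagonal d =
    ![v 0 * d 0, v 1 * d 1, v 2 * d 2, v 3 * d 3, v 4 * d 4, v 5 * d 5, v 6 * d 6] := by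
  rw [funext_iff, forall_fin7]
  simp only [Matrix.vecMul_diagonal,
    vec7_0, vec7_1, vec7_2, vec7_3, vec7_4, vec7_5, vec7_6, and_self]

/-- A matrix which preserves the product `cr`. -/
def PresCr (M : Matrix (Fin 7) (Fin 7) F) : Prop :=
  ∀ v w : Fin 7 → F, cr (v ᵥ* M) (w ᵥ* M) = cr v w ᵥ* M

lemma presCr_amat (h3 : (3 : F) = 0) (t : ℕ) (x : F) : PresCr (amat t x) := by
  intro v w
  simp only [vecMul_amat]
  rw [funext_iff, forall_fin7]
  simp only [cr, vec7_0, vec7_1, vec7_2, vec7_3, vec7_4, vec7_5, vec7_6]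
  generalize x ^ t = X
  generalize v 0 = v0
  generalize v 1 = v1
  generalize v 2 = v2
  generalize v 3 = v3
  generalize v 4 = v4
  generalize v 5 = v5
  generalize v 6 = v6
  generalize w 0 = w0
  generalize w 1 = w1
  generalize w 2 = w2
  generalize w 3 = w3
  generalize w 4 = w4
  generalize w 5 = w5
  generalize w 6 = w6
  refine ⟨?_, ?_, ?_, ?_, ?_, ?_, ?_⟩
  all_goals
    first
    | ring1
    | grind

lemma presCr_bmat (h3 : (3 : F) = 0) (t : ℕ) (x : F) : PresCr (bmat t x) := by
  intro v w
  simp only [vecMul_bmat]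
  rw [funext_iff, forall_fin7]
  simp only [cr, vec7_0, vec7_1, vec7_2, vec7_3, vec7_4, vec7_5, vec7_6]
  generalize x ^ t = X
  refine ⟨?_, ?_, ?_, ?_, ?_, ?_, ?_⟩
  all_goals
    first
    | ring1
    | grind

lemma presCr_cmat (h3 : (3 : F) = 0) (t : ℕ) (x : F) : PresCr (cmat t x) := by
  intro v w
  simp only [vecMul_cmat]
  rw [funext_iff, forall_fin7]
  simp only [cr, vec7_0, vec7_1, vec7_2, vec7_3, vec7_4, vec7_5, vec7_6]
  generalize x ^ t = X
  refine ⟨?_, ?_, ?_, ?_, ?_, ?_, ?_⟩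
  all_goals
    first
    | ring1
    | grind

lemma presCr_ups : PresCr (ups : Matrix (Fin 7) (Fin 7) F) := by
  intro v w
  simp only [vecMul_ups]
  rw [funext_iff, forall_fin7]
  simp only [cr, vec7_0, vec7_1, vec7_2, vec7_3, vec7_4, vec7_5, vec7_6]
  refine ⟨?_, ?_, ?_, ?_, ?_, ?_, ?_⟩ <;> ring1

lemma presCr_hmat (t : ℕ) (l : Fˣ) : PresCr (hmat t l) := by
  intro v w
  simp only [hmat, vecMul_diag]
  rw [funext_iff, forall_fin7]
  simp only [cr, vec7_0, vec7_1, vec7_2, vec7_3, vec7_4, vec7_5, vec7_6]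
  simp only [_root_.zpow_sub, _root_.zpow_neg, two_mul, _root_.zpow_add, zpow_one, zpow_natCast]
  push_cast
  have hl : (l : F) ≠ 0 := l.ne_zero
  have hp : (l : F) ^ t ≠ 0 := pow_ne_zero _ hl
  generalize (l : F) ^ t = p at *
  generalize (l : F) = l at *
  refine ⟨?_, ?_, ?_, ?_, ?_, ?_, ?_⟩ <;> field_simp <;> ring1

lemma isAbs_hmat (θ φ : F →+* F) (hφ : ∀ x, φ x = θ x ^ 3) (hφθ : ∀ x, φ (θ x) = x)
    (t : ℕ) (hθ : ∀ x, x ^ t = θ x) (l : Fˣ) (v : Fin 7 → F) (h : IsAbs φ v) :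
    IsAbs φ (v ᵥ* hmat t l) := by
  obtain ⟨y, h1, h2⟩ := h
  refine ⟨y ᵥ* hmat t l, ?_, ?_⟩
  · intro i
    rw [presCr_hmat t l v y, show cr v y = 0 from funext h1, Matrix.zero_vecMul]
    rfl
  · rw [forall_fin7] at h2 ⊢
    simp only [hmat, vecMul_diag]
    simp only [pq, vec7_0, vec7_1, vec7_2, vec7_3, vec7_4, vec7_5, vec7_6, map_mul] at h2 ⊢
    simp only [← h2]
    simp only [_root_.zpow_sub, _root_.zpow_neg, two_mul, _root_.zpow_add, zpow_one, zpow_natCast]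
    push_cast
    simp only [map_mul, map_inv₀, hθ, hφθ, map_one]
    simp only [hφ]
    have hl : (l : F) ≠ 0 := l.ne_zero
    have hp : θ (l : F) ≠ 0 := (map_ne_zero θ).2 hl
    generalize θ (l : F) = p at *
    generalize (l : F) = l at *
    refine ⟨?_, ?_, ?_, ?_, ?_, ?_, ?_⟩ <;> field_simp <;> ring1

/-- The abstract setup: `θ` is the `t`-power map and `φ` its inverse. -/
structure Setup (θ φ : F →+* F) (t : ℕ) : Prop where
  h3 : (3 : F) = 0
  hφ : ∀ x, φ x = θ x ^ 3
  hφθ : ∀ x, φ (θ x) = x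
  hθφ : ∀ x, θ (φ x) = x
  hθ : ∀ x, x ^ t = θ x

variable {θ φ : F →+* F} {t : ℕ}

lemma oV_amat (S : Setup θ φ t) (a b c x : F) : oVec t a b c ᵥ* amat t x =
    oVec t (a + x) (b - a * φ x) (c - a ^ 2 * φ x - x * b + a * x * φ x) := by
  obtain ⟨h3, hφ, hφθ, hθφ, hθ⟩ := S
  rw [vecMul_amat, oVec_eq, oVec_eq]
  simp only [hθ, map_add, map_sub, map_mul, map_pow, hθφ]
  simp only [hφ]
  generalize θ a = A
  generalize θ b = B
  generalize θ c = C
  generalize θ x = X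
  clear hφ hφθ hθφ hθ
  rw [funext_iff, forall_fin7]
  simp only [oV, vec7_0, vec7_1, vec7_2, vec7_3, vec7_4, vec7_5, vec7_6]
  refine ⟨?_, ?_, ?_, ?_, ?_, ?_, ?_⟩
  all_goals
    first
    | ring1
    | grind

lemma oV_bmat (S : Setup θ φ t) (a b c x : F) : oVec t a b c ᵥ* bmat t x =
    oVec t a (b + x) c := by
  obtain ⟨h3, hφ, hφθ, hθφ, hθ⟩ := S
  rw [vecMul_bmat, oVec_eq, oVec_eq]
  simp only [hθ, map_add]
  generalize θ a = A
  generalize θ b = B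
  generalize θ c = C
  generalize θ x = X
  clear hφ hφθ hθφ hθ
  rw [funext_iff, forall_fin7]
  simp only [oV, vec7_0, vec7_1, vec7_2, vec7_3, vec7_4, vec7_5, vec7_6]
  refine ⟨?_, ?_, ?_, ?_, ?_, ?_, ?_⟩
  all_goals
    first
    | ring1
    | grind

lemma oV_cmat (S : Setup θ φ t) (a b c x : F) : oVec t a b c ᵥ* cmat t x =
    oVec t a b (c + x) := by
  obtain ⟨h3, hφ, hφθ, hθφ, hθ⟩ := S
  rw [vecMul_cmat, oVec_eq, oVec_eq]
  simp only [hθ, map_add]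
  generalize θ a = A
  generalize θ b = B
  generalize θ c = C
  generalize θ x = X
  clear hφ hφθ hθφ hθ
  rw [funext_iff, forall_fin7]
  simp only [oV, vec7_0, vec7_1, vec7_2, vec7_3, vec7_4, vec7_5, vec7_6]
  refine ⟨?_, ?_, ?_, ?_, ?_, ?_, ?_⟩
  all_goals
    first
    | ring1
    | grind

lemma exists_GL (M : Matrix (Fin 7) (Fin 7) F) (h : ∀ i j, j < i → M i j = 0)
    (h1 : ∀ i, M i i = 1) : ∃ g : GL (Fin 7) F, (g : Matrix (Fin 7) (Fin 7) F) = M := by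
  have hd : M.det = 1 := by
    rw [Matrix.det_of_upperTriangular (fun i j hij => h i j hij)]
    simp [h1]
  exact ⟨Matrix.GeneralLinearGroup.mkOfDetNeZero M (by rw [hd]; exact one_ne_zero), rfl⟩

lemma exists_amat (t : ℕ) (x : F) :
    ∃ g : GL (Fin 7) F, (g : Matrix (Fin 7) (Fin 7) F) = amat t x := by
  apply exists_GL
  · intro i j hij
    fin_cases i <;> fin_cases j <;> first | rfl | (exfalso; revert hij; decide)
  · intro i
    fin_cases i <;> rfl

lemma exists_bmat (t : ℕ) (x : F) :
    ∃ g : GL (Fin 7) F, (g : Matrix (Fin 7) (Fin 7) F) = bmat t x := by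
  apply exists_GL
  · intro i j hij
    fin_cases i <;> fin_cases j <;> first | rfl | (exfalso; revert hij; decide)
  · intro i
    fin_cases i <;> rfl

lemma exists_cmat (t : ℕ) (x : F) :
    ∃ g : GL (Fin 7) F, (g : Matrix (Fin 7) (Fin 7) F) = cmat t x := by
  apply exists_GL
  · intro i j hij
    fin_cases i <;> fin_cases j <;> first | rfl | (exfalso; revert hij; decide)
  · intro i
    fin_cases i <;> rfl

lemma ups_mul_ups : (ups : Matrix (Fin 7) (Fin 7) F) * ups = 1 := by
  ext i j
  have := congrFun (vecMul_ups (F := F) (ups i)) j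
  rw [Matrix.mul_apply_eq_vecMul, this]
  fin_cases i <;> fin_cases j <;> simp [ups]

/-- `Υ` as an element of the general linear group. -/
def upsG : GL (Fin 7) F := ⟨ups, ups, ups_mul_ups, ups_mul_ups⟩

end ReePaper

set_option linter.unusedSimpArgs false
namespace ReePaper

variable {F : Type*} [Field F] {θ φ : F →+* F} {t : ℕ}

/-- The `i`-th standard row vector. -/
def ee (i : Fin 7) : Fin 7 → F := Pi.single i 1

lemma ee_vecMul (M : Matrix (Fin 7) (Fin 7) F) (i : Fin 7) : ee i ᵥ* M = M i := by
  ext j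
  simp [ee]

lemma ee_mk : (ee 0 : Fin 7 → F) = ![1, 0, 0, 0, 0, 0, 0] ∧
    (ee 1 : Fin 7 → F) = ![0, 1, 0, 0, 0, 0, 0] ∧
    (ee 2 : Fin 7 → F) = ![0, 0, 1, 0, 0, 0, 0] ∧
    (ee 3 : Fin 7 → F) = ![0, 0, 0, 1, 0, 0, 0] ∧
    (ee 4 : Fin 7 → F) = ![0, 0, 0, 0, 1, 0, 0] ∧
    (ee 5 : Fin 7 → F) = ![0, 0, 0, 0, 0, 1, 0] ∧
    (ee 6 : Fin 7 → F) = ![0, 0, 0, 0, 0, 0, 1] := by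
  refine ⟨?_, ?_, ?_, ?_, ?_, ?_, ?_⟩ <;> (ext i; fin_cases i <;> simp [ee])

lemma cr_rows {M : Matrix (Fin 7) (Fin 7) F} (hM : PresCr M) {i j : Fin 7} {w : Fin 7 → F}
    (h : cr (ee i) (ee j) = w) : cr (M i) (M j) = w ᵥ* M := by
  rw [← h, ← hM, ee_vecMul, ee_vecMul]

/-- The elements fixing `P∞` and `P0`: the matrix part. -/
lemma key_diag (S : Setup θ φ t) (M : Matrix (Fin 7) (Fin 7) F) (hM : PresCr M)
    (d0 d6 : F) (hd0 : d0 ≠ 0) (hd6 : d6 ≠ 0)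
    (h0 : M 0 = ![d0, 0, 0, 0, 0, 0, 0]) (h6 : M 6 = ![0, 0, 0, 0, 0, 0, d6])
    (k1 a1 b1 c1 k2 a2 b2 c2 : F)
    (hc : oVec t 0 0 1 ᵥ* M = k1 • oVec t a1 b1 c1)
    (hb : oVec t 0 1 0 ᵥ* M = k2 • oVec t a2 b2 c2) :
    ∃ l : Fˣ, M = hmat t l := by
  have h2 : (2 : F) ≠ 0 := by
    intro h
    have h3 := S.h3
    have : (1 : F) = 0 := by linear_combination h3 - h
    exact one_ne_zero this
  obtain ⟨e0, e1, e2, e3, e4, e5, e6⟩ := ee_mk (F := F)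
  have vm : ∀ v : Fin 7 → F, ∀ j, (v ᵥ* M) j = v 0 * M 0 j + v 1 * M 1 j + v 2 * M 2 j
      + v 3 * M 3 j + v 4 * M 4 j + v 5 * M 5 j + v 6 * M 6 j := by
    intro v j
    simp only [Matrix.vecMul, dotProduct, Fin.sum_univ_seven]
  have key : ∀ i j (w : Fin 7 → F), cr (ee i) (ee j) = w → ∀ k, cr (M i) (M j) k = (w ᵥ* M) k := by
    intro i j w h k
    rw [cr_rows hM h]
  have r06 := key 0 6 (-ee 3) (by
    rw [funext_iff, forall_fin7]; simp [cr, e0, e6, e3])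
  have r03 := key 0 3 (-ee 0) (by
    rw [funext_iff, forall_fin7]; simp [cr, e0, e3])
  have r01 := key 0 1 0 (by
    rw [funext_iff, forall_fin7]; simp [cr, e0, e1])
  have r13 := key 1 3 (ee 1) (by
    rw [funext_iff, forall_fin7]; simp [cr, e1, e3])
  have r02 := key 0 2 0 (by
    rw [funext_iff, forall_fin7]; simp [cr, e0, e2])
  have r23 := key 2 3 (ee 2) (by
    rw [funext_iff, forall_fin7]; simp [cr, e2, e3])
  have r46 := key 4 6 0 (by
    rw [funext_iff, forall_fin7]; simp [cr, e4, e6])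
  have r34 := key 3 4 (ee 4) (by
    rw [funext_iff, forall_fin7]; simp [cr, e3, e4])
  have r56 := key 5 6 0 (by
    rw [funext_iff, forall_fin7]; simp [cr, e5, e6])
  have r35 := key 3 5 (ee 5) (by
    rw [funext_iff, forall_fin7]; simp [cr, e3, e5])
  have r05 := key 0 5 (-ee 2) (by
    rw [funext_iff, forall_fin7]; simp [cr, e0, e5, e2])
  have r04 := key 0 4 (ee 1) (by
    rw [funext_iff, forall_fin7]; simp [cr, e0, e4, e1])
  have r45 := key 4 5 (ee 6) (by
    rw [funext_iff, forall_fin7]; simp [cr, e4, e5, e6])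
  clear key
  rw [forall_fin7] at r06 r03 r01 r13 r02 r23 r46 r34 r56 r35 r05 r04 r45
  simp only [Matrix.neg_vecMul, ee_vecMul, Matrix.zero_vecMul, Pi.neg_apply, Pi.zero_apply,
    cr, h0, h6, vec7_0, vec7_1, vec7_2, vec7_3, vec7_4, vec7_5, vec7_6] at r06 r03 r01 r13 r02 r23 r46 r34 r56 r35 r05 r04 r45
  simp only [mul_zero, zero_mul, sub_zero, zero_sub, neg_zero, add_zero, zero_add, neg_neg, neg_inj,
    mul_neg, neg_mul, neg_eq_zero, zero_eq_neg] at r06 r03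
  obtain ⟨p30, p31, p32, p33, p34, p35, p36⟩ := r06
  have hd : d0 * d6 = 1 := mul_left_cancel₀ hd0 (by rw [p33]; linear_combination r03.1)
  rw [hd] at p33
  have q3 : M 3 = ![0, 0, 0, 1, 0, 0, 0] := by
    rw [funext_iff, forall_fin7]
    exact ⟨p30, p31, p32, p33.symm, p34, p35, p36⟩
  have aux : ∀ x : F, -x = x → x = 0 := by
    intro x hx
    have h5 : 2 * x = 0 := by linear_combination -hx
    exact (mul_eq_zero.1 h5).resolve_left h2
  clear r03 p30 p31 p32 p33 p34 p35 p36
  simp only [q3, vec7_0, vec7_1, vec7_2, vec7_3, vec7_4, vec7_5, vec7_6, hd0, hd6, mul_eq_zero,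
    false_or, or_false, mul_zero, zero_mul, sub_zero, zero_sub, neg_zero, add_zero, zero_add,
    neg_neg, neg_inj, mul_one, one_mul,
    mul_neg, neg_mul, neg_eq_zero, zero_eq_neg, and_true, true_and] at r01 r13 r02 r23 r46 r34 r56 r35 r05 r04 r45
  have q1 : M 1 = ![0, d0 * M 4 4, -(d0 * M 4 5), 0, 0, 0, 0] := by
    rw [funext_iff, forall_fin7]
    exact ⟨aux _ r13.1, r04.2.1.symm, r04.2.2.1.symm, r01.1, r01.2.1, r01.2.2.1, r01.2.2.2⟩
  have q2 : M 2 = ![0, -(d0 * M 5 4), d0 * M 5 5, 0, 0, 0, 0] := by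
    rw [funext_iff, forall_fin7]
    exact ⟨aux _ r23.1, by rw [vec7_1, r05.2.1, neg_neg], r05.2.2.1.symm, r02.1, r02.2.1,
      r02.2.2.1, r02.2.2.2⟩
  have q4 : M 4 = ![0, 0, 0, 0, M 4 4, M 4 5, 0] := by
    rw [funext_iff, forall_fin7]
    exact ⟨r46.1, r46.2.1, r46.2.2.1, r46.2.2.2, rfl, rfl, aux _ r34.2.2.2⟩
  have q5 : M 5 = ![0, 0, 0, 0, M 5 4, M 5 5, 0] := by
    rw [funext_iff, forall_fin7]
    exact ⟨r56.1, r56.2.1, r56.2.2.1, r56.2.2.2, rfl, rfl, aux _ r35.2.2.2⟩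
  have r45' := r45.2.2.2.2.2.2
  rw [r46.2.2.2, r56.2.2.2] at r45'
  clear r01 r13 r02 r23 r46 r34 r56 r35 r05 r04 r45
  generalize M 4 4 = z4 at *
  generalize M 4 5 = z5 at *
  generalize M 5 4 = w4 at *
  generalize M 5 5 = w5 at *
  rw [funext_iff, forall_fin7] at hc hb
  simp only [vm, oVec_eq, S.hθ, map_zero, map_one, Pi.smul_apply, smul_eq_mul, oV, h0, q1, q2, q3,
    q4, q5, h6, vec7_0, vec7_1, vec7_2, vec7_3, vec7_4, vec7_5, vec7_6] at hc hb
  obtain ⟨c0, cc1, cc2, cc3, cc4, cc5, -⟩ := hc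
  obtain ⟨b0, bb1, bb2, bb3, bb4, bb5, -⟩ := hb
  have inj : ∀ x, θ x = 0 → x = 0 := fun x hx => (map_eq_zero θ).1 hx
  have hk1 : k1 = d0 := by linear_combination -c0
  have hk2 : k2 = d0 := by linear_combination -b0
  subst hk1
  have ha1 : θ a1 = 0 := by
    refine (mul_eq_zero.1 ?_).resolve_left hd0
    linear_combination -cc1
  have hb1 : θ b1 = 0 := by
    refine (mul_eq_zero.1 ?_).resolve_left hd0
    linear_combination cc2
  rw [ha1, hb1] at cc3 cc5
  rw [ha1] at cc4
  rw [inj _ ha1, inj _ hb1] at cc4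
  rw [inj _ ha1] at cc5
  have hC : θ c1 = d6 := mul_left_cancel₀ hd0 (by linear_combination cc3 - hd)
  have hw4 : w4 = 0 := by linear_combination -cc4
  have hc1 : c1 = φ d6 := by rw [← hC, S.hφθ]
  have hw5 : w5 = k1 * φ d6 := by rw [← hc1]; linear_combination -cc5
  subst hw4
  rw [hk2] at bb1 bb3 bb5
  have ha2 : θ a2 = 0 := by
    refine (mul_eq_zero.1 ?_).resolve_left hd0
    linear_combination -bb1
  rw [ha2] at bb3 bb5
  rw [inj _ ha2] at bb5
  have hc2 : θ c2 = 0 := by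
    refine (mul_eq_zero.1 ?_).resolve_left hd0
    linear_combination bb3
  rw [hc2, inj _ hc2] at bb5
  have hz5 : z5 = 0 := by linear_combination -bb5
  subst hz5
  have hl0 : φ k1 ≠ 0 := (map_ne_zero φ).2 hd0
  have hdd : φ k1 * φ d6 = 1 := by rw [← map_mul, hd, map_one]
  have hlt : φ k1 ^ t = k1 := by rw [S.hθ, S.hθφ]
  refine ⟨Units.mk0 (φ k1) hl0, ?_⟩
  have d6i : d6 = k1⁻¹ := by field_simp; linear_combination hd
  have d6i' : φ d6 = (φ k1)⁻¹ := by rw [d6i, map_inv₀]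
  have ew5 : w5 = k1 * (φ k1)⁻¹ := by rw [hw5, d6i']
  have ez4 : z4 = φ k1 * (k1⁻¹ * k1⁻¹) := by
    rw [ew5, d6i] at r45'
    field_simp at r45' ⊢
    linear_combination r45'
  have hrow : ∀ i, M i = hmat t (Units.mk0 (φ k1) hl0) i := by
    intro i
    rw [← ee_vecMul (hmat t _), hmat, vecMul_diag]
    simp only [_root_.zpow_sub, _root_.zpow_neg, two_mul, _root_.zpow_add, zpow_one, zpow_natCast]
    push_cast
    simp only [Units.val_mk0, hlt]
    revert i
    rw [forall_fin7]
    rw [h0, q1, q2, q3, q4, q5, h6]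
    simp only [e0, e1, e2, e3, e4, e5, e6, vec7_0, vec7_1, vec7_2, vec7_3, vec7_4, vec7_5,
      vec7_6, zero_mul, one_mul, mul_zero, neg_zero, ez4, ew5, d6i]
    refine ⟨?_, ?_, ?_, ?_, ?_, ?_, ?_⟩ <;> first | trivial | skip
    all_goals
      rw [funext_iff, forall_fin7]
      simp only [vec7_0, vec7_1, vec7_2, vec7_3, vec7_4, vec7_5, vec7_6, true_and, and_true]
    all_goals field_simp
  ext i j
  rw [hrow i]

end ReePaper

set_option linter.unusedSectionVars false
namespace ReePaper

open Projectivization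

variable {F : Type*} [Field F]

lemma vecMul_GL_ne (g : GL (Fin 7) F) {v : Fin 7 → F} (hv : v ≠ 0) :
    v ᵥ* (g : Matrix (Fin 7) (Fin 7) F) ≠ 0 := by
  intro h
  apply hv
  have h2 := congrArg (fun w => w ᵥ* ((g⁻¹ : GL (Fin 7) F) : Matrix (Fin 7) (Fin 7) F)) h
  simp only [Matrix.vecMul_vecMul, Matrix.zero_vecMul] at h2
  rwa [g.mul_inv, Matrix.vecMul_one] at h2

lemma mk_congr {v w : Fin 7 → F} (hv : v ≠ 0) (hw : w ≠ 0) (h : v = w) :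
    mk F v hv = mk F w hw := by
  subst h
  rfl

lemma ptAct_mk (g : GL (Fin 7) F) {v w : Fin 7 → F} (hv : v ≠ 0) (hw : w ≠ 0)
    (h : v ᵥ* (g : Matrix (Fin 7) (Fin 7) F) = w) : ptAct g (mk F v hv) = mk F w hw := by
  subst h
  rfl

lemma einf_ne : (![0, 0, 0, 0, 0, 0, 1] : Fin 7 → F) ≠ 0 :=
  fun h => one_ne_zero (congrFun h 6 : (1 : F) = 0)

lemma ezero_ne : (![1, 0, 0, 0, 0, 0, 0] : Fin 7 → F) ≠ 0 :=
  fun h => one_ne_zero (congrFun h 0 : (1 : F) = 0)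

lemma ptAct_one (P : Projectivization F (Fin 7 → F)) : ptAct 1 P = P := by
  induction P using Projectivization.ind with
  | h v hv =>
    apply ptAct_mk
    simp

lemma ptAct_mul (g h : GL (Fin 7) F) (P : Projectivization F (Fin 7 → F)) :
    ptAct (g * h) P = ptAct h (ptAct g P) := by
  induction P using Projectivization.ind with
  | h v hv =>
    rw [ptAct_mk g hv (vecMul_GL_ne g hv) rfl,
      ptAct_mk h (vecMul_GL_ne g hv) (vecMul_GL_ne h (vecMul_GL_ne g hv)) rfl]
    apply ptAct_mk
    simp

lemma ptAct_inv_of {g : GL (Fin 7) F} {P Q : Projectivization F (Fin 7 → F)}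
    (h : ptAct g P = Q) : ptAct g⁻¹ Q = P := by
  rw [← h, ← ptAct_mul, mul_inv_cancel, ptAct_one]

lemma ptAct_inj (g : GL (Fin 7) F) : Function.Injective (ptAct g) := by
  intro P Q h
  have h1 := ptAct_inv_of h
  rw [← h1, ← ptAct_mul, mul_inv_cancel, ptAct_one]

variable [Fintype F] {θ φ : F →+* F} {t : ℕ}

lemma oVec_zero (S : Setup θ φ t) : oVec t (0 : F) 0 0 = ![1, 0, 0, 0, 0, 0, 0] := by
  rw [oVec_eq]
  simp only [S.hθ, map_zero, oV]
  rw [funext_iff, forall_fin7]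
  simp only [vec7_0, vec7_1, vec7_2, vec7_3, vec7_4, vec7_5, vec7_6]
  refine ⟨?_, ?_, ?_, ?_, ?_, ?_, ?_⟩ <;> first | trivial | ring1

/-- The point of `O` with parameters `a, b, c`. -/
def oPt (t : ℕ) (a b c : F) : Projectivization F (Fin 7 → F) :=
  mk F (oVec t a b c) (oVec_ne_zero t a b c)

lemma Pzero_eq (S : Setup θ φ t) : (Pzero : Projectivization F (Fin 7 → F)) = oPt t 0 0 0 :=
  mk_congr _ _ (oVec_zero S).symm

lemma mem_O {P : Projectivization F (Fin 7 → F)} :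
    P ∈ Oset (F := F) t ↔ P = Pinf ∨ ∃ a b c, P = oPt t a b c := Iff.rfl

lemma isAbs_oVec (S : Setup θ φ t) (a b c : F) : IsAbs φ (oVec t a b c) := by
  rw [oVec_eq]
  simp only [S.hθ]
  exact isAbs_oV θ φ S.h3 S.hφ S.hφθ a b c

lemma mem_O_of_isAbs (S : Setup θ φ t) (v : Fin 7 → F) (hv : v ≠ 0) (h : IsAbs φ v) :
    mk F v hv ∈ Oset (F := F) t := by
  rw [mem_O]
  by_cases h0 : v 0 = 0
  · left
    obtain ⟨h1, h2, h3, h4, h5⟩ := isAbs_zero φ v h0 h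
    refine (mk_eq_mk_iff' _ _ _ _ _).2 ⟨v 6, ?_⟩
    rw [funext_iff, forall_fin7]
    simp only [Pi.smul_apply, smul_eq_mul, vec7_0, vec7_1, vec7_2, vec7_3, vec7_4, vec7_5, vec7_6,
      h0, h1, h2, h3, h4, h5, mul_zero, mul_one, and_self]
  · right
    have h1 := isAbs_smul φ v (v 0)⁻¹ (inv_ne_zero h0) h
    obtain ⟨a, b, c, habc⟩ := isAbs_one θ φ S.h3 S.hφ S.hφθ S.hθφ _
      (by rw [Pi.smul_apply, smul_eq_mul, inv_mul_cancel₀ h0]) h1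
    refine ⟨a, b, c, (mk_eq_mk_iff' _ _ _ _ _).2 ⟨v 0, ?_⟩⟩
    rw [oVec_eq]
    simp only [S.hθ]
    rw [← habc, smul_smul, mul_inv_cancel₀ h0, one_smul]

lemma pinf_amat {g : GL (Fin 7) F} {x : F} (h : (g : Matrix (Fin 7) (Fin 7) F) = amat t x) :
    ptAct g Pinf = Pinf := by
  refine ptAct_mk _ _ _ ?_
  rw [h, vecMul_amat, funext_iff, forall_fin7]
  simp only [vec7_0, vec7_1, vec7_2, vec7_3, vec7_4, vec7_5, vec7_6]
  refine ⟨?_, ?_, ?_, ?_, ?_, ?_, ?_⟩ <;> first | trivial | ring1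

lemma pinf_bmat {g : GL (Fin 7) F} {x : F} (h : (g : Matrix (Fin 7) (Fin 7) F) = bmat t x) :
    ptAct g Pinf = Pinf := by
  refine ptAct_mk _ _ _ ?_
  rw [h, vecMul_bmat, funext_iff, forall_fin7]
  simp only [vec7_0, vec7_1, vec7_2, vec7_3, vec7_4, vec7_5, vec7_6]
  refine ⟨?_, ?_, ?_, ?_, ?_, ?_, ?_⟩ <;> first | trivial | ring1

lemma pinf_cmat {g : GL (Fin 7) F} {x : F} (h : (g : Matrix (Fin 7) (Fin 7) F) = cmat t x) :
    ptAct g Pinf = Pinf := by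
  refine ptAct_mk _ _ _ ?_
  rw [h, vecMul_cmat, funext_iff, forall_fin7]
  simp only [vec7_0, vec7_1, vec7_2, vec7_3, vec7_4, vec7_5, vec7_6]
  refine ⟨?_, ?_, ?_, ?_, ?_, ?_, ?_⟩ <;> first | trivial | ring1

lemma pinf_hmat {g : GL (Fin 7) F} {l : Fˣ} (h : (g : Matrix (Fin 7) (Fin 7) F) = hmat t l) :
    ptAct g Pinf = Pinf := by
  rw [Pinf, ptAct_mk g _ (vecMul_GL_ne g einf_ne) rfl]
  refine (mk_eq_mk_iff' _ _ _ _ _).2 ⟨((l ^ (-(t : ℤ)) : Fˣ) : F), ?_⟩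
  rw [h, hmat, vecMul_diag, funext_iff, forall_fin7]
  simp only [Pi.smul_apply, smul_eq_mul, vec7_0, vec7_1, vec7_2, vec7_3, vec7_4, vec7_5, vec7_6,
    zero_mul, mul_zero, mul_one, one_mul, and_self]

lemma pzero_hmat {g : GL (Fin 7) F} {l : Fˣ} (h : (g : Matrix (Fin 7) (Fin 7) F) = hmat t l) :
    ptAct g Pzero = Pzero := by
  rw [Pzero, ptAct_mk g _ (vecMul_GL_ne g ezero_ne) rfl]
  refine (mk_eq_mk_iff' _ _ _ _ _).2 ⟨((l ^ (t : ℤ) : Fˣ) : F), ?_⟩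
  rw [h, hmat, vecMul_diag, funext_iff, forall_fin7]
  simp only [Pi.smul_apply, smul_eq_mul, vec7_0, vec7_1, vec7_2, vec7_3, vec7_4, vec7_5, vec7_6,
    zero_mul, mul_zero, mul_one, one_mul, and_self]

lemma pinf_ups : ptAct upsG (Pinf : Projectivization F (Fin 7 → F)) = Pzero := by
  rw [Pinf, ptAct_mk upsG _ (vecMul_GL_ne upsG einf_ne) rfl]
  refine (mk_eq_mk_iff' _ _ _ _ _).2 ⟨-1, ?_⟩
  rw [upsG, vecMul_ups, funext_iff, forall_fin7]
  simp only [Pi.smul_apply, smul_eq_mul, vec7_0, vec7_1, vec7_2, vec7_3, vec7_4, vec7_5, vec7_6,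
    neg_zero, mul_zero, mul_one, and_self]

lemma upsG_mul_self : (upsG : GL (Fin 7) F) * upsG = 1 := by
  ext1
  exact ups_mul_ups

lemma pzero_ups : ptAct upsG (Pzero : Projectivization F (Fin 7 → F)) = Pinf := by
  rw [← pinf_ups, ← ptAct_mul, upsG_mul_self, ptAct_one]

lemma oPt_amat (S : Setup θ φ t) {g : GL (Fin 7) F} {x : F}
    (h : (g : Matrix (Fin 7) (Fin 7) F) = amat t x) (a b c : F) : ptAct g (oPt t a b c) =
    oPt t (a + x) (b - a * φ x) (c - a ^ 2 * φ x - x * b + a * x * φ x) :=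
  ptAct_mk _ _ _ (by rw [h, oV_amat S])

lemma oPt_bmat (S : Setup θ φ t) {g : GL (Fin 7) F} {x : F}
    (h : (g : Matrix (Fin 7) (Fin 7) F) = bmat t x) (a b c : F) : ptAct g (oPt t a b c) =
    oPt t a (b + x) c :=
  ptAct_mk _ _ _ (by rw [h, oV_bmat S])

lemma oPt_cmat (S : Setup θ φ t) {g : GL (Fin 7) F} {x : F}
    (h : (g : Matrix (Fin 7) (Fin 7) F) = cmat t x) (a b c : F) : ptAct g (oPt t a b c) =
    oPt t a b (c + x) :=
  ptAct_mk _ _ _ (by rw [h, oV_cmat S])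

/-- The invariants of elements of the Ree group. -/
def Good (t : ℕ) (g : GL (Fin 7) F) : Prop :=
  PresCr (g : Matrix (Fin 7) (Fin 7) F) ∧ ∀ P ∈ Oset (F := F) t, ptAct g P ∈ Oset (F := F) t

lemma good_ups (S : Setup θ φ t) : Good t (upsG : GL (Fin 7) F) := by
  refine ⟨presCr_ups, ?_⟩
  intro P hP
  rcases mem_O.1 hP with rfl | ⟨a, b, c, rfl⟩
  · rw [pinf_ups, Pzero_eq S]
    exact mem_O.2 (Or.inr ⟨_, _, _, rfl⟩)
  · rw [oPt, ptAct_mk upsG _ (vecMul_GL_ne upsG (oVec_ne_zero t a b c)) rfl]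
    apply mem_O_of_isAbs S
    rw [upsG, vecMul_ups]
    exact isAbs_ups φ _ (isAbs_oVec S a b c)

lemma good_hmat (S : Setup θ φ t) {g : GL (Fin 7) F} {l : Fˣ}
    (h : (g : Matrix (Fin 7) (Fin 7) F) = hmat t l) : Good t g := by
  refine ⟨h ▸ presCr_hmat t l, ?_⟩
  intro P hP
  rcases mem_O.1 hP with rfl | ⟨a, b, c, rfl⟩
  · rw [pinf_hmat h]
    exact hP
  · rw [oPt, ptAct_mk g _ (vecMul_GL_ne g (oVec_ne_zero t a b c)) rfl]
    apply mem_O_of_isAbs S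
    rw [h]
    exact isAbs_hmat θ φ S.hφ S.hφθ t S.hθ l _ (isAbs_oVec S a b c)

lemma good_of_Ree (S : Setup θ φ t) {g : GL (Fin 7) F} (hg : g ∈ ReeGroup (F := F) t) :
    Good t g := by
  induction hg using Subgroup.closure_induction with
  | mem g hg =>
    rcases hg with ⟨x, h⟩ | ⟨x, h⟩ | ⟨x, h⟩ | ⟨l, h⟩ | h
    · refine ⟨h ▸ presCr_amat S.h3 t x, ?_⟩
      intro P hP
      rcases mem_O.1 hP with rfl | ⟨a, b, c, rfl⟩
      · rw [pinf_amat h]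
        exact hP
      · rw [oPt_amat S h]
        exact mem_O.2 (Or.inr ⟨_, _, _, rfl⟩)
    · refine ⟨h ▸ presCr_bmat S.h3 t x, ?_⟩
      intro P hP
      rcases mem_O.1 hP with rfl | ⟨a, b, c, rfl⟩
      · rw [pinf_bmat h]
        exact hP
      · rw [oPt_bmat S h]
        exact mem_O.2 (Or.inr ⟨_, _, _, rfl⟩)
    · refine ⟨h ▸ presCr_cmat S.h3 t x, ?_⟩
      intro P hP
      rcases mem_O.1 hP with rfl | ⟨a, b, c, rfl⟩
      · rw [pinf_cmat h]
        exact hP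
      · rw [oPt_cmat S h]
        exact mem_O.2 (Or.inr ⟨_, _, _, rfl⟩)
    · exact good_hmat S h
    · have : g = upsG := by
        ext1
        exact h
      rw [this]
      exact good_ups S
  | one =>
    refine ⟨?_, ?_⟩
    · intro v w
      simp
    · intro P hP
      rwa [ptAct_one]
  | mul g h _ _ ihg ihh =>
    refine ⟨?_, ?_⟩
    · intro v w
      simp only [Units.val_mul, ← Matrix.vecMul_vecMul]
      rw [ihh.1, ihg.1]
    · intro P hP
      rw [ptAct_mul]
      exact ihh.2 _ (ihg.2 _ hP)
  | inv g _ ih =>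
    have hi : ∀ v : Fin 7 → F, (v ᵥ* ((g⁻¹ : GL (Fin 7) F) : Matrix (Fin 7) (Fin 7) F)) ᵥ*
        (g : Matrix (Fin 7) (Fin 7) F) = v := by
      intro v
      rw [Matrix.vecMul_vecMul, g.inv_mul, Matrix.vecMul_one]
    have hi' : ∀ v : Fin 7 → F, (v ᵥ* (g : Matrix (Fin 7) (Fin 7) F)) ᵥ*
        ((g⁻¹ : GL (Fin 7) F) : Matrix (Fin 7) (Fin 7) F) = v := by
      intro v
      rw [Matrix.vecMul_vecMul, g.mul_inv, Matrix.vecMul_one]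
    refine ⟨?_, ?_⟩
    · intro v w
      have h1 := ih.1 (v ᵥ* ((g⁻¹ : GL (Fin 7) F) : Matrix (Fin 7) (Fin 7) F))
        (w ᵥ* ((g⁻¹ : GL (Fin 7) F) : Matrix (Fin 7) (Fin 7) F))
      rw [hi, hi] at h1
      rw [h1, hi']
    · intro P hP
      have hfin : (Oset (F := F) t).Finite := Set.toFinite _
      have hs := ((hfin.injOn_iff_bijOn_of_mapsTo (f := ptAct g) ih.2).1
        ((ptAct_inj g).injOn)).surjOn
      obtain ⟨Q, hQ, h⟩ := hs hP
      rw [ptAct_inv_of h]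
      exact hQ

end ReePaper

namespace ReePaper

open Projectivization

variable {F : Type*} [Field F] [Fintype F] {θ φ : F →+* F} {t : ℕ}

lemma oPt_ne_Pinf (a b c : F) : oPt t a b c ≠ Pinf := by
  intro h
  obtain ⟨k, hk⟩ := (mk_eq_mk_iff' _ _ _ _ _).1 h
  have h0 := congrFun hk 0
  rw [Pi.smul_apply, vec7_0, smul_zero, show oVec t a b c 0 = 1 from rfl] at h0
  exact zero_ne_one h0

lemma oPt_inj (S : Setup θ φ t) {a b c a' b' c' : F} (h : oPt t a b c = oPt t a' b' c') :
    a = a' ∧ b = b' ∧ c = c' := by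
  obtain ⟨k, hk⟩ := (mk_eq_mk_iff' _ _ _ _ _).1 h
  rw [funext_iff, forall_fin7] at hk
  simp only [oVec_eq, S.hθ, Pi.smul_apply, smul_eq_mul, oV, vec7_0, vec7_1, vec7_2, vec7_3,
    vec7_4, vec7_5, vec7_6] at hk
  obtain ⟨h0, h1, h2, h3, -⟩ := hk
  rw [mul_one] at h0
  subst h0
  have ha : a = a' := θ.injective (by linear_combination -h1)
  have hb : b = b' := θ.injective (by linear_combination h2)
  subst ha hb
  exact ⟨rfl, rfl, θ.injective (by linear_combination h3)⟩

lemma key_h (S : Setup θ φ t) {g : GL (Fin 7) F} (hg : Good t g)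
    (h1 : ptAct g Pinf = Pinf) (h2 : ptAct g Pzero = Pzero) :
    ∃ l : Fˣ, (g : Matrix (Fin 7) (Fin 7) F) = hmat t l := by
  obtain ⟨e0, -, -, -, -, -, e6⟩ := ee_mk (F := F)
  obtain ⟨d6, hd6⟩ := (mk_eq_mk_iff' F _ _ (vecMul_GL_ne g einf_ne) einf_ne).1 h1
  obtain ⟨d0, hd0⟩ := (mk_eq_mk_iff' F _ _ (vecMul_GL_ne g ezero_ne) ezero_ne).1 h2
  have hne6 : d6 ≠ 0 := by
    rintro rfl
    rw [zero_smul] at hd6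
    exact vecMul_GL_ne g einf_ne hd6.symm
  have hne0 : d0 ≠ 0 := by
    rintro rfl
    rw [zero_smul] at hd0
    exact vecMul_GL_ne g ezero_ne hd0.symm
  have hp : ∀ a b c : F, ∃ k a' b' c' : F, oVec t a b c ᵥ* (g : Matrix (Fin 7) (Fin 7) F) =
      k • oVec t a' b' c' := by
    intro a b c
    rcases mem_O.1 (hg.2 _ (mem_O.2 (Or.inr ⟨a, b, c, rfl⟩))) with h | ⟨a', b', c', h⟩
    · exfalso
      rw [← h1] at h
      exact oPt_ne_Pinf a b c (ptAct_inj g h)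
    · obtain ⟨k, hk⟩ := (mk_eq_mk_iff' F _ _ (vecMul_GL_ne g (oVec_ne_zero t a b c))
        (oVec_ne_zero t a' b' c')).1 h
      exact ⟨k, a', b', c', hk.symm⟩
  obtain ⟨k1, a1, b1, c1, hc⟩ := hp 0 0 1
  obtain ⟨k2, a2, b2, c2, hb⟩ := hp 0 1 0
  refine key_diag S _ hg.1 d0 d6 hne0 hne6 ?_ ?_ k1 a1 b1 c1 k2 a2 b2 c2 hc hb
  · rw [← ee_vecMul (g : Matrix (Fin 7) (Fin 7) F) 0, e0, ← hd0]
    simp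
  · rw [← ee_vecMul (g : Matrix (Fin 7) (Fin 7) F) 6, e6, ← hd6]
    simp

lemma Usub_le : Usub (F := F) t ≤ ReeGroup (F := F) t := by
  apply Subgroup.closure_mono
  rintro g (h | h | h)
  · exact Or.inl h
  · exact Or.inr (Or.inl h)
  · exact Or.inr (Or.inr (Or.inl h))

lemma Hsub_le : Hsub (F := F) t ≤ ReeGroup (F := F) t := by
  apply Subgroup.closure_mono
  rintro g h
  exact Or.inr (Or.inr (Or.inr (Or.inl h)))

lemma upsG_mem : (upsG : GL (Fin 7) F) ∈ ReeGroup (F := F) t :=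
  Subgroup.subset_closure (Or.inr (Or.inr (Or.inr (Or.inr rfl))))

lemma Usub_fix {g : GL (Fin 7) F} (hg : g ∈ Usub (F := F) t) : ptAct g Pinf = Pinf := by
  induction hg using Subgroup.closure_induction with
  | mem g hg =>
    rcases hg with ⟨x, h⟩ | ⟨x, h⟩ | ⟨x, h⟩
    · exact pinf_amat h
    · exact pinf_bmat h
    · exact pinf_cmat h
  | one => exact ptAct_one _
  | mul g h _ _ ihg ihh => rw [ptAct_mul, ihg, ihh]
  | inv g _ ih => exact ptAct_inv_of ih

lemma Hsub_fix {g : GL (Fin 7) F} (hg : g ∈ Hsub (F := F) t) :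
    ptAct g Pinf = Pinf ∧ ptAct g Pzero = Pzero := by
  induction hg using Subgroup.closure_induction with
  | mem g hg =>
    obtain ⟨l, h⟩ := hg
    exact ⟨pinf_hmat h, pzero_hmat h⟩
  | one => exact ⟨ptAct_one _, ptAct_one _⟩
  | mul g h _ _ ihg ihh =>
    exact ⟨by rw [ptAct_mul, ihg.1, ihh.1], by rw [ptAct_mul, ihg.2, ihh.2]⟩
  | inv g _ ih => exact ⟨ptAct_inv_of ih.1, ptAct_inv_of ih.2⟩

lemma exists_U (S : Setup θ φ t) (a b c : F) :
    ∃ u ∈ Usub (F := F) t, ptAct u Pzero = oPt t a b c := by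
  obtain ⟨g1, h1⟩ := exists_amat t a
  obtain ⟨g2, h2⟩ := exists_bmat t b
  obtain ⟨g3, h3⟩ := exists_cmat t c
  refine ⟨g1 * g2 * g3, ?_, ?_⟩
  · refine mul_mem (mul_mem ?_ ?_) ?_
    · exact Subgroup.subset_closure (Or.inl ⟨a, h1⟩)
    · exact Subgroup.subset_closure (Or.inr (Or.inl ⟨b, h2⟩))
    · exact Subgroup.subset_closure (Or.inr (Or.inr ⟨c, h3⟩))
  · rw [ptAct_mul, ptAct_mul, Pzero_eq S, oPt_amat S h1, oPt_bmat S h2, oPt_cmat S h3]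
    congr 1 <;> ring

lemma move_pair (S : Setup θ φ t) {P Q : Projectivization F (Fin 7 → F)}
    (hP : P ∈ Oset (F := F) t) (hQ : Q ∈ Oset (F := F) t) (hPQ : P ≠ Q) :
    ∃ g ∈ ReeGroup (F := F) t, ptAct g Pinf = P ∧ ptAct g Pzero = Q := by
  obtain ⟨g1, hg1, h1⟩ : ∃ g ∈ ReeGroup (F := F) t, ptAct g Pinf = P := by
    rcases mem_O.1 hP with rfl | ⟨a, b, c, rfl⟩
    · exact ⟨1, one_mem _, ptAct_one _⟩
    · obtain ⟨u, hu, h⟩ := exists_U S a b c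
      exact ⟨upsG * u, mul_mem upsG_mem (Usub_le hu), by rw [ptAct_mul, pinf_ups, h]⟩
  have hQ' := (good_of_Ree S (inv_mem hg1)).2 Q hQ
  rcases mem_O.1 hQ' with h | ⟨a, b, c, h⟩
  · exfalso
    rw [← ptAct_inv_of h1] at h
    exact hPQ (ptAct_inj _ h).symm
  · obtain ⟨u, hu, h2⟩ := exists_U S a b c
    refine ⟨u * g1, mul_mem (Usub_le hu) hg1, ?_, ?_⟩
    · rw [ptAct_mul, Usub_fix hu, h1]
    · rw [ptAct_mul, h2, ← h, ← ptAct_mul, inv_mul_cancel, ptAct_one]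

lemma stab_pair (S : Setup θ φ t) {g : GL (Fin 7) F} : (g ∈ ReeGroup (F := F) t ∧
    ptAct g Pinf = Pinf ∧ ptAct g Pzero = Pzero) ↔ g ∈ Hsub (F := F) t := by
  constructor
  · rintro ⟨hg, h1, h2⟩
    exact Subgroup.subset_closure (key_h S (good_of_Ree S hg) h1 h2)
  · intro hg
    exact ⟨Hsub_le hg, Hsub_fix hg⟩

lemma stab_inf (S : Setup θ φ t) {g : GL (Fin 7) F} : (g ∈ ReeGroup (F := F) t ∧
    ptAct g Pinf = Pinf) ↔
    ∃ u ∈ Usub (F := F) t, ∃ h ∈ Hsub (F := F) t, g = u * h := by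
  constructor
  · rintro ⟨hg, h1⟩
    have hz : (Pzero : Projectivization F (Fin 7 → F)) ∈ Oset (F := F) t := by
      rw [Pzero_eq S]
      exact mem_O.2 (Or.inr ⟨_, _, _, rfl⟩)
    have h2 := (good_of_Ree S (inv_mem hg)).2 Pzero hz
    have h1' := ptAct_inv_of h1
    rcases mem_O.1 h2 with h | ⟨a, b, c, h⟩
    · exfalso
      rw [← h1'] at h
      have h3 := ptAct_inj _ h
      rw [Pzero_eq S] at h3
      exact oPt_ne_Pinf _ _ _ h3
    · obtain ⟨u, hu, h3⟩ := exists_U S a b c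
      refine ⟨u⁻¹, inv_mem hu, u * g, ?_, by group⟩
      rw [← stab_pair S]
      refine ⟨mul_mem (Usub_le hu) hg, ?_, ?_⟩
      · rw [ptAct_mul, Usub_fix hu, h1]
      · rw [ptAct_mul, h3, ← h, ← ptAct_mul, inv_mul_cancel, ptAct_one]
  · rintro ⟨u, hu, h, hh, rfl⟩
    exact ⟨mul_mem (Usub_le hu) (Hsub_le hh), by rw [ptAct_mul, Usub_fix hu, (Hsub_fix hh).1]⟩

lemma stab_zero (S : Setup θ φ t) {g : GL (Fin 7) F} : (g ∈ ReeGroup (F := F) t ∧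
    ptAct g Pzero = Pzero) ↔ ∃ x : GL (Fin 7) F,
      (∃ u ∈ Usub (F := F) t, ∃ h ∈ Hsub (F := F) t, x = u * h) ∧
      (g : Matrix (Fin 7) (Fin 7) F) = ups * (x : Matrix (Fin 7) (Fin 7) F) * ups := by
  constructor
  · rintro ⟨hg, h1⟩
    refine ⟨upsG * g * upsG, (stab_inf S).1 ⟨mul_mem (mul_mem upsG_mem hg) upsG_mem, ?_⟩, ?_⟩
    · rw [ptAct_mul, ptAct_mul, pinf_ups, h1, pzero_ups]
    · have h2 : g = upsG * (upsG * g * upsG) * upsG := by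
        rw [mul_assoc, mul_assoc, upsG_mul_self, mul_one, ← mul_assoc, upsG_mul_self, one_mul]
      exact congrArg (fun y : GL (Fin 7) F => (y : Matrix (Fin 7) (Fin 7) F)) h2
  · rintro ⟨x, hx, h⟩
    obtain ⟨hx1, hx2⟩ := (stab_inf S).2 hx
    have h2 : g = upsG * x * upsG := by
      ext1
      exact h
    subst h2
    refine ⟨mul_mem (mul_mem upsG_mem hx1) upsG_mem, ?_⟩
    rw [ptAct_mul, ptAct_mul, pzero_ups, hx2, pinf_ups]

lemma hmat_one : hmat t (1 : Fˣ) = 1 := by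
  rw [← Matrix.diagonal_one, hmat]
  congr 1
  rw [funext_iff, forall_fin7]
  simp only [_root_.one_zpow, Units.val_one, vec7_0, vec7_1, vec7_2, vec7_3, vec7_4, vec7_5, vec7_6,
    and_self]

lemma faithful (S : Setup θ φ t) {g : GL (Fin 7) F} (hg : g ∈ ReeGroup (F := F) t)
    (hfix : ∀ P ∈ Oset (F := F) t, ptAct g P = P) : g = 1 := by
  have hz : (Pzero : Projectivization F (Fin 7 → F)) ∈ Oset (F := F) t := by
    rw [Pzero_eq S]
    exact mem_O.2 (Or.inr ⟨_, _, _, rfl⟩)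
  obtain ⟨l, hl⟩ := key_h S (good_of_Ree S hg) (hfix _ (mem_O.2 (Or.inl rfl))) (hfix _ hz)
  have h1 := hfix (oPt t 0 0 1) (mem_O.2 (Or.inr ⟨_, _, _, rfl⟩))
  obtain ⟨k, hk⟩ := (mk_eq_mk_iff' F _ _ (vecMul_GL_ne g (oVec_ne_zero t 0 0 1))
    (oVec_ne_zero t 0 0 1)).1 h1
  rw [hl, hmat, vecMul_diag, oVec_eq] at hk
  rw [funext_iff, forall_fin7] at hk
  simp only [S.hθ, map_zero, map_one, Pi.smul_apply, smul_eq_mul, oV, vec7_0, vec7_1, vec7_2,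
    vec7_3, vec7_4, vec7_5, vec7_6, zpow_natCast, Units.val_pow_eq_pow_val] at hk
  obtain ⟨h0, -, -, h3, -⟩ := hk
  have hl1 : θ (l : F) = θ 1 := by
    rw [map_one]
    linear_combination -h0 - h3
  have hl2 : l = 1 := by
    ext1
    exact θ.injective hl1
  ext1
  rw [hl, hl2, hmat_one]
  rfl

lemma card_O (S : Setup θ φ t) : (Oset (F := F) t).ncard = Fintype.card F ^ 3 + 1 := by
  have hO : Oset (F := F) t = insert Pinf
      (Set.range (fun x : F × F × F => oPt t x.1 x.2.1 x.2.2)) := by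
    ext P
    rw [mem_O, Set.mem_insert_iff, Set.mem_range]
    constructor
    · rintro (h | ⟨a, b, c, h⟩)
      · exact Or.inl h
      · exact Or.inr ⟨(a, b, c), h.symm⟩
    · rintro (h | ⟨⟨a, b, c⟩, h⟩)
      · exact Or.inl h
      · exact Or.inr ⟨a, b, c, h.symm⟩
  rw [hO, Set.ncard_insert_of_notMem _ (Set.toFinite _)]
  · rw [← Set.image_univ, Set.ncard_image_of_injective, Set.ncard_univ, Nat.card_eq_fintype_card,
      Fintype.card_prod, Fintype.card_prod]
    · ring
    · rintro ⟨a, b, c⟩ ⟨a', b', c'⟩ h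
      obtain ⟨rfl, rfl, rfl⟩ := oPt_inj S h
      rfl
  · rintro ⟨⟨a, b, c⟩, h⟩
    exact oPt_ne_Pinf _ _ _ h

lemma exists_setup (m : ℕ) (hF : Fintype.card F = 3 ^ (2 * m + 1)) :
    ∃ θ φ : F →+* F, Setup θ φ (3 ^ m) := by
  haveI : Fact (Nat.Prime 3) := ⟨Nat.prime_three⟩
  haveI : CharP F 3 := charP_of_card_eq_prime_pow hF
  have hq : ∀ x : F, x ^ (3 ^ (2 * m + 1)) = x := by
    intro x
    rw [← hF]
    exact FiniteField.pow_card x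
  refine ⟨iterateFrobenius F 3 m, iterateFrobenius F 3 (m + 1), ?_, ?_, ?_, ?_, ?_⟩
  · exact_mod_cast CharP.cast_eq_zero F 3
  · intro x
    rw [iterateFrobenius_def, iterateFrobenius_def, ← pow_mul, pow_succ]
  · intro x
    rw [iterateFrobenius_def, iterateFrobenius_def, ← pow_mul, ← pow_add,
      show m + (m + 1) = 2 * m + 1 by ring, hq]
  · intro x
    rw [iterateFrobenius_def, iterateFrobenius_def, ← pow_mul, ← pow_add,
      show m + 1 + m = 2 * m + 1 by ring, hq]
  · intro x
    rw [iterateFrobenius_def]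

end ReePaper

/-- `|O| = q^3 + 1`; `O` is invariant under `Ree(q)`; `Ree(q)` acts faithfully and doubly
transitively on `O`; the stabilizer of `P∞` is `U(q)H(q)`, the stabilizer of `P₀` is
`(U(q)H(q))^Υ`, and the stabilizer of the pair `(P∞, P₀)` is `H(q)`. -/
theorem ovoid_action (m : ℕ) (hm : 0 < m) (F : Type*) [Field F] [Fintype F]
    (hF : Fintype.card F = 3 ^ (2 * m + 1)) :
    (Oset (F := F) (3 ^ m)).ncard = (3 ^ (2 * m + 1)) ^ 3 + 1 ∧
    (∀ g ∈ ReeGroup (F := F) (3 ^ m), ∀ P ∈ Oset (F := F) (3 ^ m),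
      ptAct g P ∈ Oset (F := F) (3 ^ m)) ∧
    (∀ g ∈ ReeGroup (F := F) (3 ^ m),
      (∀ P ∈ Oset (F := F) (3 ^ m), ptAct g P = P) → g = 1) ∧
    (∀ P₁ Q₁ P₂ Q₂ : Projectivization F (Fin 7 → F),
      P₁ ∈ Oset (F := F) (3 ^ m) → Q₁ ∈ Oset (F := F) (3 ^ m) →
      P₂ ∈ Oset (F := F) (3 ^ m) → Q₂ ∈ Oset (F := F) (3 ^ m) →
      P₁ ≠ Q₁ → P₂ ≠ Q₂ →
      ∃ g ∈ ReeGroup (F := F) (3 ^ m), ptAct g P₁ = P₂ ∧ ptAct g Q₁ = Q₂) ∧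
    {g : GL (Fin 7) F | g ∈ ReeGroup (F := F) (3 ^ m) ∧ ptAct g Pinf = Pinf} =
      {g : GL (Fin 7) F |
        ∃ u ∈ Usub (F := F) (3 ^ m), ∃ h ∈ Hsub (F := F) (3 ^ m), g = u * h} ∧
    {g : GL (Fin 7) F | g ∈ ReeGroup (F := F) (3 ^ m) ∧ ptAct g Pzero = Pzero} =
      {g : GL (Fin 7) F | ∃ x : GL (Fin 7) F,
        (∃ u ∈ Usub (F := F) (3 ^ m), ∃ h ∈ Hsub (F := F) (3 ^ m), x = u * h) ∧
        (g : Matrix (Fin 7) (Fin 7) F) = ups * (x : Matrix (Fin 7) (Fin 7) F) * ups} ∧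
    {g : GL (Fin 7) F | g ∈ ReeGroup (F := F) (3 ^ m) ∧
        ptAct g Pinf = Pinf ∧ ptAct g Pzero = Pzero} =
      (Hsub (F := F) (3 ^ m) : Set (GL (Fin 7) F)) := by
  obtain ⟨θ, φ, S⟩ := exists_setup (F := F) m hF
  refine ⟨?_, ?_, ?_, ?_, ?_, ?_, ?_⟩
  · rw [card_O S, hF]
  · intro g hg P hP
    exact (good_of_Ree S hg).2 P hP
  · intro g hg h
    exact faithful S hg h
  · intro P₁ Q₁ P₂ Q₂ hP₁ hQ₁ hP₂ hQ₂ h₁ h₂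
    obtain ⟨g₁, hg₁, e₁, f₁⟩ := move_pair S hP₁ hQ₁ h₁
    obtain ⟨g₂, hg₂, e₂, f₂⟩ := move_pair S hP₂ hQ₂ h₂
    refine ⟨g₁⁻¹ * g₂, mul_mem (inv_mem hg₁) hg₂, ?_, ?_⟩
    · rw [ptAct_mul, ptAct_inv_of e₁, e₂]
    · rw [ptAct_mul, ptAct_inv_of f₁, f₂]
  · ext g
    exact stab_inf S
  · ext g
    exact stab_zero S
  · ext g
    exact stab_pair S
end
end

section
/- Let F be a finite field, let d be an odd positive integer, let G ≤ GL(d, F) be a subgroup preserving a non-degenerate bilinear form B on F^d (that is, B(u·g, v·g) = B(u, v) for all g ∈ G and all u, v ∈ F^d), and let g ∈ G with det(g) = 1. Then 1 is an eigenvalue of g. -/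
open Matrix

/-- If `G ≤ GL(d, F)` with `d` odd preserves a non-degenerate bilinear form and
`g ∈ G` has determinant 1, then 1 is an eigenvalue of `g`. -/
theorem eigenvalue_one_of_det_one (F : Type*) [Field F] [Fintype F]
    (d : ℕ) (hd0 : 0 < d) (hd : Odd d)
    (B : (Fin d → F) →ₗ[F] (Fin d → F) →ₗ[F] F)
    (hB : ∀ v : Fin d → F, (∀ w : Fin d → F, B v w = 0) → v = 0)
    (G : Subgroup (GL (Fin d) F))
    (hG : ∀ g ∈ G, ∀ u v : Fin d → F,
      B (u ᵥ* (g : Matrix (Fin d) (Fin d) F)) (v ᵥ* (g : Matrix (Fin d) (Fin d) F)) = B u v)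
    (g : GL (Fin d) F) (hg : g ∈ G)
    (hdet : (g : Matrix (Fin d) (Fin d) F).det = 1) :
    ∃ v : Fin d → F, v ≠ 0 ∧ v ᵥ* (g : Matrix (Fin d) (Fin d) F) = v := by
  classical
  have hg' := hG g hg
  generalize (g : Matrix (Fin d) (Fin d) F) = A at *
  set J := LinearMap.toMatrix₂' F B with hJ
  have hBJ : ∀ u v, B u v = u ⬝ᵥ J *ᵥ v := by
    intro u v
    conv_lhs => rw [← Matrix.toLinearMap₂'_toMatrix' (R := F) B]
    rw [Matrix.toLinearMap₂'_apply']
  have hJdet : J.det ≠ 0 := by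
    intro h
    obtain ⟨v, hv, hv0⟩ := Matrix.exists_vecMul_eq_zero_iff.mpr h
    apply hv
    apply hB
    intro w
    rw [hBJ, Matrix.dotProduct_mulVec, hv0, zero_dotProduct]
  have hAJ : A * J * Aᵀ = J := by
    ext i j
    have := hg' (Pi.single i 1) (Pi.single j 1)
    rw [hBJ, hBJ] at this
    rw [← Matrix.mulVec_transpose A (Pi.single j 1), ← Matrix.dotProduct_mulVec,
      Matrix.mulVec_mulVec, Matrix.mulVec_mulVec] at this
    simpa using this
  have hrev : A.charpolyRev = - A.charpoly := by
    have key : (1 - (Polynomial.X : Polynomial F) • A.map Polynomial.C) * (J.map Polynomial.C * Aᵀ.map Polynomial.C) = J.map Polynomial.C * (-(Aᵀ.charmatrix)) := by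
      have h2 : A.map Polynomial.C * (J.map Polynomial.C * Aᵀ.map Polynomial.C) = J.map Polynomial.C := by
        rw [← Matrix.map_mul, ← Matrix.map_mul, ← mul_assoc, hAJ]
      rw [sub_mul, one_mul, smul_mul_assoc, h2]
      simp only [charmatrix, neg_sub, mul_sub]
      congr 1
      simp [← Matrix.smul_one_eq_diagonal]
    have h3 := congrArg Matrix.det key
    have hA1 : (Aᵀ.map (Polynomial.C : F →+* Polynomial F)).det = 1 := by
      have := RingHom.map_det (Polynomial.C : F →+* Polynomial F) Aᵀ
      rw [RingHom.mapMatrix_apply] at this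
      rw [← this, det_transpose, hdet, map_one]
    have hJ1 : (J.map (Polynomial.C : F →+* Polynomial F)).det ≠ 0 := by
      have := RingHom.map_det (Polynomial.C : F →+* Polynomial F) J
      rw [RingHom.mapMatrix_apply] at this
      rw [← this]
      simpa using hJdet
    rw [det_mul, det_mul, det_mul, hA1, det_neg, Fintype.card_fin, hd.neg_one_pow, mul_one, mul_comm] at h3
    have h4 := mul_left_cancel₀ hJ1 h3
    rw [Matrix.charpolyRev, h4, neg_one_mul, ← Matrix.charpoly, charpoly_transpose]
  have hnd : A.charpoly.natDegree = d := by simp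
  have h0 : A.charpoly.eval 1 = 0 := by
    rw [← Matrix.reverse_charpoly] at hrev
    rw [Polynomial.eval_eq_sum_range, hnd]
    refine Finset.sum_involution (fun i _ => d - i) ?_ ?_ ?_ ?_
    · intro i hi
      have hi' : i ≤ d := by simpa [Nat.lt_succ_iff] using hi
      have := congrArg (fun p => Polynomial.coeff p i) hrev
      simp only [Polynomial.coeff_reverse, hnd, Polynomial.revAt_le hi', Polynomial.coeff_neg] at this
      simp [this]
    · intro i hi _
      have hi' : i ≤ d := by simpa [Nat.lt_succ_iff] using hi
      obtain ⟨k, hk⟩ := hd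
      omega
    · intro i hi
      simp
    · intro i hi
      have hi' : i ≤ d := by simpa [Nat.lt_succ_iff] using hi
      omega
  rw [Matrix.eval_charpoly] at h0
  obtain ⟨v, hv, hv0⟩ := Matrix.exists_vecMul_eq_zero_iff.mpr h0
  refine ⟨v, hv, ?_⟩
  rw [map_one, Matrix.vecMul_sub, Matrix.vecMul_one, sub_eq_zero] at hv0
  exact hv0.symm
end
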